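/- Let p be a prime and let R be a commutative local F_p-algebra that is finite-dimensional as an F_p-vector space, with maximal ideal m and residue field F = R/m. Let G be a group and let M, N, Q be modules over the group algebra R[G] that are free of rank 2 as R-modules. Suppose there is a short exact sequence 0 → N → M ⊕ M → Q → 0 of R[G]-modules, and suppose that the F[G]-module N̄ = (R/m) ⊗_R N is indecomposable, i.e. N̄ is nonzero and is not the internal direct sum of two nonzero F[G]-submodules. Then N ≅ M and M ≅ Q as R[G]-modules. -/

import Mathlib

/-!
Write `αᵢ : N → Mᵢ` for the components of `α`. Flatness of `Q` keeps `α` injective modulo the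
maximal ideal, so the reductions of `α₁` and `α₂` have disjoint kernels. If both kernels were
nonzero, they would be complementary lines in the plane `N̄`, contradicting indecomposability. Hence
some `αᵢ` is injective modulo the maximal ideal and, the ranks being equal, an isomorphism. Then the
image of `α` is the graph of a map from `Mᵢ` to the other summand, so it is a complement of that
other summand, which therefore maps isomorphically onto `Q`.
-/

open TensorProduct

section Indecomposable

variable {k G V : Type*} [Monoid G]

/-- A representation is indecomposable if it is nonzero and is not the internal direct sum of two
nonzero subrepresentations. -/
structure IsIndecomposable [Semiring k] [AddCommMonoid V] [Module k V]
    (ρ : Representation k G V) : Prop where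
  nontrivial : Nontrivial V
  eq_bot_or_eq_bot : ∀ W₁ W₂ : Subrepresentation ρ, IsCompl W₁ W₂ → W₁ = ⊥ ∨ W₂ = ⊥

theorem IsIndecomposable.of_not_exists_submodule [Semiring k] [AddCommMonoid V] [Module k V]
    [Nontrivial V] {ρ : Representation k G V}
    (h : ¬ ∃ W₁ W₂ : Submodule k V, (∀ g, W₁.map (ρ g) ≤ W₁) ∧ (∀ g, W₂.map (ρ g) ≤ W₂) ∧
      W₁ ≠ ⊥ ∧ W₂ ≠ ⊥ ∧ W₁ ⊓ W₂ = ⊥ ∧ W₁ ⊔ W₂ = ⊤) :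
    IsIndecomposable ρ := by
  refine ⟨‹_›, fun W₁ W₂ hW ↦ ?_⟩
  by_contra! hne
  exact h ⟨W₁.toSubmodule, W₂.toSubmodule,
    fun g ↦ Submodule.map_le_iff_le_comap.2 (W₁.apply_mem_toSubmodule g),
    fun g ↦ Submodule.map_le_iff_le_comap.2 (W₂.apply_mem_toSubmodule g),
    fun h₁ ↦ hne.1 (Subrepresentation.toSubmodule_injective h₁),
    fun h₂ ↦ hne.2 (Subrepresentation.toSubmodule_injective h₂),
    congrArg Subrepresentation.toSubmodule hW.inf_eq_bot,
    congrArg Subrepresentation.toSubmodule hW.sup_eq_top⟩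

theorem IsIndecomposable.injective_or_injective_of_disjoint_ker [DivisionRing k]
    [AddCommGroup V] [Module k V] [FiniteDimensional k V] {W₁ W₂ : Type*}
    [AddCommGroup W₁] [Module k W₁] [AddCommGroup W₂] [Module k W₂]
    {ρ : Representation k G V} {σ₁ : Representation k G W₁} {σ₂ : Representation k G W₂}
    (hρ : IsIndecomposable ρ) (hV : Module.finrank k V ≤ 2)
    (f₁ : ρ.IntertwiningMap σ₁) (f₂ : ρ.IntertwiningMap σ₂)
    (hdisj : Disjoint f₁.toLinearMap.ker f₂.toLinearMap.ker) :
    Function.Injective f₁ ∨ Function.Injective f₂ := by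
  by_contra! hinj
  have hne₁ : f₁.toLinearMap.ker ≠ ⊥ := fun h ↦ hinj.1 (LinearMap.ker_eq_bot.1 h)
  have hne₂ : f₂.toLinearMap.ker ≠ ⊥ := fun h ↦ hinj.2 (LinearMap.ker_eq_bot.1 h)
  have hsup : f₁.toLinearMap.ker ⊔ f₂.toLinearMap.ker = ⊤ :=
    Submodule.eq_top_of_disjoint _ _ (hV.trans <| Nat.add_le_add
      (Submodule.one_le_finrank_iff.2 hne₁) (Submodule.one_le_finrank_iff.2 hne₂)) hdisj
  have hcompl : IsCompl f₁.ker f₂.ker :=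
    .of_eq (Subrepresentation.toSubmodule_injective hdisj.eq_bot)
      (Subrepresentation.toSubmodule_injective hsup)
  exact (hρ.eq_bot_or_eq_bot _ _ hcompl).elim
    (fun h ↦ hne₁ (congrArg Subrepresentation.toSubmodule h))
    fun h ↦ hne₂ (congrArg Subrepresentation.toSubmodule h)

end Indecomposable

section BaseChange

variable {R : Type*} (A : Type*) {G V W : Type*} [CommSemiring R] [Semiring A] [Algebra R A]
  [Monoid G] [AddCommMonoid V] [Module R V] [AddCommMonoid W] [Module R W]

/-- The extension of scalars `A ⊗[R] V` of a representation `V` over `R`, with `G` acting on the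
second factor. -/
noncomputable def baseChangeRepresentation (ρ : Representation R G V) :
    Representation A G (A ⊗[R] V) :=
  (Module.End.baseChangeHom R A V : Module.End R V →* Module.End A (A ⊗[R] V)).comp ρ

variable {ρ : Representation R G V} {σ : Representation R G W}

/-- The extension of scalars of an intertwining map. -/
noncomputable def baseChangeIntertwiningMap (f : ρ.IntertwiningMap σ) :
    (baseChangeRepresentation A ρ).IntertwiningMap (baseChangeRepresentation A σ) where
  toLinearMap := f.toLinearMap.baseChange A
  isIntertwining' g := by
    change f.toLinearMap.baseChange A ∘ₗ (ρ g).baseChange A =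
      (σ g).baseChange A ∘ₗ f.toLinearMap.baseChange A
    rw [← LinearMap.baseChange_comp, ← LinearMap.baseChange_comp, f.isIntertwining']

end BaseChange

theorem disjoint_ker_baseChange_fst_snd {R A M₁ M₂ N : Type*}
    [CommSemiring R] [Semiring A] [Algebra R A] [AddCommMonoid M₁] [Module R M₁]
    [AddCommMonoid M₂] [Module R M₂] [AddCommMonoid N] [Module R N]
    {α : N →ₗ[R] M₁ × M₂} (hα : Function.Injective (α.baseChange A)) :
    Disjoint ((LinearMap.fst R M₁ M₂ ∘ₗ α).baseChange A).ker
      ((LinearMap.snd R M₁ M₂ ∘ₗ α).baseChange A).ker := by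
  refine Submodule.disjoint_def.2 fun x h₁ h₂ ↦ hα ?_
  have hsum : α = LinearMap.inl R M₁ M₂ ∘ₗ LinearMap.fst R M₁ M₂ ∘ₗ α +
      LinearMap.inr R M₁ M₂ ∘ₗ LinearMap.snd R M₁ M₂ ∘ₗ α := by
    ext n <;> simp
  rw [LinearMap.mem_ker] at h₁ h₂
  rw [hsum, LinearMap.baseChange_add, LinearMap.add_apply, LinearMap.baseChange_comp,
    LinearMap.baseChange_comp _ (LinearMap.inr R M₁ M₂), LinearMap.comp_apply, LinearMap.comp_apply,
    h₁, h₂]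
  simp only [map_zero, add_zero]

theorem bijective_of_injective_baseChange_residueField {R M N : Type*} [CommRing R] [IsLocalRing R]
    [AddCommGroup M] [Module R M] [Module.Free R M] [Module.Finite R M]
    [AddCommGroup N] [Module R N] [Module.Free R N] [Module.Finite R N]
    (hrank : Module.finrank R M ≤ Module.finrank R N) {f : N →ₗ[R] M}
    (hf : Function.Injective (f.baseChange (IsLocalRing.ResidueField R))) :
    Function.Bijective f := by
  obtain ⟨l, hl⟩ := (IsLocalRing.split_injective_iff_lTensor_residueField_injective f).2 hf
  have hlf : Function.LeftInverse l f := LinearMap.congr_fun hl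
  have hl_bij := OrzechProperty.bijective_of_surjective_of_finrank_le l hlf.surjective hrank
  exact ⟨hlf.injective, (hlf.rightInverse_of_injective hl_bij.injective).surjective⟩

theorem bijective_comp_of_exact_of_exact {R N E Q A B : Type*} [Ring R]
    [AddCommGroup N] [Module R N] [AddCommGroup E] [Module R E] [AddCommGroup Q] [Module R Q]
    [AddCommGroup A] [Module R A] [AddCommGroup B] [Module R B]
    {α : N →ₗ[R] E} {β : E →ₗ[R] Q} {i : A →ₗ[R] E} {π : E →ₗ[R] B}
    (hαβ : Function.Exact α β) (hβ : Function.Surjective β)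
    (hiπ : Function.Exact i π) (hi : Function.Injective i)
    (h : Function.Bijective (π ∘ₗ α)) : Function.Bijective (β ∘ₗ i) := by
  constructor
  · refine (injective_iff_map_eq_zero _).2 fun a ha ↦ ?_
    obtain ⟨n, hn⟩ := (hαβ (i a)).1 ha
    have hn_zero : n = 0 := (map_eq_zero_iff _ h.injective).1 <| by
      rw [LinearMap.comp_apply, hn, hiπ.apply_apply_eq_zero]
    rw [← map_eq_zero_iff i hi, ← hn, hn_zero, map_zero]
  · intro q
    obtain ⟨e, rfl⟩ := hβ q
    obtain ⟨n, hn⟩ := h.surjective (π e)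
    obtain ⟨a, ha⟩ := (hiπ (e - α n)).1 <| by
      rw [map_sub, ← hn, LinearMap.comp_apply, sub_self]
    refine ⟨a, ?_⟩
    rw [LinearMap.comp_apply, ha, map_sub, hαβ.apply_apply_eq_zero, sub_zero]

theorem weight_one_stmt4_general {R G M₁ M₂ N Q : Type*} [CommRing R] [IsLocalRing R] [Monoid G]
    [AddCommGroup M₁] [Module R M₁] [Module.Free R M₁] [Module.Finite R M₁]
    [AddCommGroup M₂] [Module R M₂] [Module.Free R M₂] [Module.Finite R M₂]
    [AddCommGroup N] [Module R N] [Module.Free R N] [Module.Finite R N]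
    [AddCommGroup Q] [Module R Q] [Module.Flat R Q]
    (hM₁ : Module.finrank R M₁ = 2) (hM₂ : Module.finrank R M₂ = 2) (hN : Module.finrank R N = 2)
    {ρ₁ : Representation R G M₁} {ρ₂ : Representation R G M₂} {ρN : Representation R G N}
    {ρQ : Representation R G Q}
    (α : ρN.IntertwiningMap (ρ₁.prod ρ₂)) (β : (ρ₁.prod ρ₂).IntertwiningMap ρQ)
    (hα : Function.Injective α) (hβ : Function.Surjective β) (hexact : Function.Exact α β)
    (hindec : IsIndecomposable (baseChangeRepresentation (IsLocalRing.ResidueField R) ρN)) :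
    (Nonempty (ρN.Equiv ρ₁) ∧ Nonempty (ρ₂.Equiv ρQ)) ∨
      (Nonempty (ρN.Equiv ρ₂) ∧ Nonempty (ρ₁.Equiv ρQ)) := by
  let F := IsLocalRing.ResidueField R
  let α₁ := (Representation.IntertwiningMap.fst R ρ₁ ρ₂).comp α
  let α₂ := (Representation.IntertwiningMap.snd R ρ₁ ρ₂).comp α
  have hα_red : Function.Injective (α.toLinearMap.baseChange F) :=
    LinearMap.lTensor_injective_of_exact_of_flat β.toLinearMap hβ α.toLinearMap hα hexact F
  have hdim : Module.finrank F (F ⊗[R] N) ≤ 2 := (Module.finrank_baseChange.trans hN).le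
  rcases hindec.injective_or_injective_of_disjoint_ker hdim (baseChangeIntertwiningMap F α₁)
    (baseChangeIntertwiningMap F α₂) (disjoint_ker_baseChange_fst_snd hα_red) with h | h
  · have hα₁ : Function.Bijective α₁ :=
      bijective_of_injective_baseChange_residueField (hM₁.trans hN.symm).le h
    exact .inl ⟨⟨α₁.ofBijective hα₁⟩,
      ⟨(β.comp (.inr R ρ₁ ρ₂)).ofBijective
        (bijective_comp_of_exact_of_exact hexact hβ .inr_fst LinearMap.inr_injective hα₁)⟩⟩
  · have hα₂ : Function.Bijective α₂ :=
      bijective_of_injective_baseChange_residueField (hM₂.trans hN.symm).le h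
    exact .inr ⟨⟨α₂.ofBijective hα₂⟩,
      ⟨(β.comp (.inl R ρ₁ ρ₂)).ofBijective
        (bijective_comp_of_exact_of_exact hexact hβ .inl_snd LinearMap.inl_injective hα₂)⟩⟩

/-- **Proposition 4.4.** Let `p` be a prime and `R` a commutative local `𝔽_p`-algebra which is
finite-dimensional as an `𝔽_p`-vector space, with maximal ideal `m` and residue field
`F = R/m`. Let `G` be a group and `M`, `N`, `Q` be `R[G]`-modules that are free of rank `2`
as `R`-modules (here given as `R`-modules with representations of `G`). Suppose there is a
short exact sequence `0 → N → M ⊕ M → Q → 0` of `R[G]`-modules and that the `F[G]`-module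
`N̄ = (R/m) ⊗_R N` is indecomposable (nonzero and not an internal direct sum of two nonzero
`F[G]`-submodules). Then `N ≅ M` and `M ≅ Q` as `R[G]`-modules. -/
theorem weight_one_stmt4
    (p : ℕ) [Fact p.Prime] (R : Type*) [CommRing R] [IsLocalRing R]
    [Algebra (ZMod p) R] [FiniteDimensional (ZMod p) R]
    (G : Type*) [Group G]
    (M N Q : Type*) [AddCommGroup M] [Module R M] [AddCommGroup N] [Module R N]
    [AddCommGroup Q] [Module R Q]
    (bM : Module.Basis (Fin 2) R M) (bN : Module.Basis (Fin 2) R N) (bQ : Module.Basis (Fin 2) R Q)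
    (ρM : Representation R G M) (ρN : Representation R G N) (ρQ : Representation R G Q)
    (α : N →ₗ[R] M × M) (β : M × M →ₗ[R] Q)
    (hα : ∀ g : G, α ∘ₗ ρN g = (LinearMap.prodMap (ρM g) (ρM g)) ∘ₗ α)
    (hβ : ∀ g : G, β ∘ₗ (LinearMap.prodMap (ρM g) (ρM g)) = ρQ g ∘ₗ β)
    (hinj : Function.Injective α) (hsurj : Function.Surjective β)
    (hexact : LinearMap.range α = LinearMap.ker β)
    (hnontriv : Nontrivial (IsLocalRing.ResidueField R ⊗[R] N))
    (hindec : ¬ ∃ W₁ W₂ :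
        Submodule (IsLocalRing.ResidueField R) (IsLocalRing.ResidueField R ⊗[R] N),
        (∀ g : G, W₁.map (LinearMap.baseChange (IsLocalRing.ResidueField R) (ρN g)) ≤ W₁) ∧
        (∀ g : G, W₂.map (LinearMap.baseChange (IsLocalRing.ResidueField R) (ρN g)) ≤ W₂) ∧
        W₁ ≠ ⊥ ∧ W₂ ≠ ⊥ ∧ W₁ ⊓ W₂ = ⊥ ∧ W₁ ⊔ W₂ = ⊤) :
    (∃ e : N ≃ₗ[R] M, ∀ (g : G) (x : N), e (ρN g x) = ρM g (e x)) ∧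
    (∃ e : M ≃ₗ[R] Q, ∀ (g : G) (x : M), e (ρM g x) = ρQ g (e x)) := by
  have : Module.Free R M := .of_basis bM
  have : Module.Finite R M := .of_basis bM
  have : Module.Free R N := .of_basis bN
  have : Module.Finite R N := .of_basis bN
  have : Module.Free R Q := .of_basis bQ
  have hM : Module.finrank R M = 2 := by simp [Module.finrank_eq_card_basis bM]
  have hN : Module.finrank R N = 2 := by simp [Module.finrank_eq_card_basis bN]
  obtain ⟨⟨e⟩, ⟨e'⟩⟩ | ⟨⟨e⟩, ⟨e'⟩⟩ := weight_one_stmt4_general (ρ₁ := ρM) (ρ₂ := ρM) hM hM hN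
    ⟨α, hα⟩ ⟨β, hβ⟩ hinj hsurj (LinearMap.exact_iff.2 hexact.symm)
    (.of_not_exists_submodule (ρ := baseChangeRepresentation _ ρN) hindec) <;>
  exact ⟨⟨e.toLinearEquiv, e.isIntertwining⟩, ⟨e'.toLinearEquiv, e'.isIntertwining⟩⟩
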